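/- arXiv:2102.07681 — 4 statements merged into one kernel-verified Lean document; each statement's English description precedes it below -/
import Mathlib

section
/- For the RPPLNS bag Markov chain, the vector π given by π_k = C(N,k)·α^k·β^{N−k}/(α+β)^N for k = 0,…,N is a probability distribution on {0,…,N} and is a stationary distribution of the chain, i.e. π_k ≥ 0 for all k, ∑_{k=0}^{N} π_k = 1, and ∑_{i=0}^{N} π_i·P(i,k) = π_k for every k ∈ {0,…,N}. -/
/-- Transition matrix of the RPPLNS bag Markov chain on `{0,…,N}`:
`P(i, i+1) = α·(N−i)/N` for `i < N`, `P(i, i−1) = β·i/N` for `i > 0`,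
`P(i, i) = 1 − α·(N−i)/N − β·i/N`, and `P(i, j) = 0` otherwise. -/
noncomputable def bagP (N : ℕ) (α β : ℝ) (i j : ℕ) : ℝ :=
  if j = i + 1 ∧ i < N then α * ((N : ℝ) - i) / N
  else if i = j + 1 then β * i / N
  else if i = j then 1 - α * ((N : ℝ) - i) / N - β * i / N
  else 0

/-- `π_k = C(N,k)·α^k·β^{N−k}/(α+β)^N`. -/
noncomputable def bagPi (N : ℕ) (α β : ℝ) (k : ℕ) : ℝ :=
  (N.choose k : ℝ) * α ^ k * β ^ (N - k) / (α + β) ^ N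

/-!
The bag chain is a birth–death chain, and `π` is the binomial distribution with success probability
`α / (α + β)`. The identity `C(N, k+1) (k+1) = C(N, k) (N-k)` says exactly that the probability flow
from `k` to `k+1` equals the flow back, so `π` satisfies detailed balance and is therefore
stationary.
-/

theorem sum_mul_eq_of_detailed_balance {ι R : Type*} [NonAssocSemiring R] {s : Finset ι}
    {μ : ι → R} {P : ι → ι → R} {k : ι} (hbal : ∀ i ∈ s, μ i * P i k = μ k * P k i)
    (hrow : ∑ i ∈ s, P k i = 1) : ∑ i ∈ s, μ i * P i k = μ k := by
  rw [Finset.sum_congr rfl hbal, ← Finset.mul_sum, hrow, mul_one]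

section BirthDeath

variable {R : Type*} [Ring R] {p q μ : ℕ → R} {N i j : ℕ}

/-- Transition matrix of the birth–death chain with birth probabilities `p` and death
probabilities `q`. The state space is all of `ℕ`; the chain restricts to `{0,…,N}` when `q 0 = 0`
and `p N = 0`. -/
def birthDeath (p q : ℕ → R) (i j : ℕ) : R :=
  if j = i + 1 then p i
  else if i = j + 1 then q i
  else if i = j then 1 - p i - q i
  else 0

theorem birthDeath_self_succ (p q : ℕ → R) (i : ℕ) : birthDeath p q i (i + 1) = p i :=
  if_pos rfl

theorem birthDeath_succ_self (p q : ℕ → R) (i : ℕ) :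
    birthDeath p q (i + 1) i = q (i + 1) := by
  simp [birthDeath, show i ≠ i + 1 + 1 by lia]

theorem birthDeath_eq_add (p q : ℕ → R) (i j : ℕ) :
    birthDeath p q i j = (if j = i + 1 then p i else 0) + (if i = j + 1 then q i else 0) +
      (if i = j then 1 - p i - q i else 0) := by
  unfold birthDeath
  split_ifs <;> first | lia | simp

theorem sum_range_birthDeath (hq : q 0 = 0) (hp : p N = 0) (hi : i ≤ N) :
    ∑ j ∈ Finset.range (N + 1), birthDeath p q i j = 1 := by
  have birth : ∑ j ∈ Finset.range (N + 1), (if j = i + 1 then p i else 0) = p i := by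
    rcases hi.eq_or_lt with rfl | hlt
    · simp [hp]
    · simp [hlt]
  have death : ∑ j ∈ Finset.range (N + 1), (if i = j + 1 then q i else 0) = q i := by
    cases i with
    | zero => simp [hq]
    | succ m => simp [show m < N + 1 by lia]
  have stay : ∑ j ∈ Finset.range (N + 1), (if i = j then 1 - p i - q i else 0)
      = 1 - p i - q i := by
    simp [Nat.lt_succ_of_le hi]
  simp only [birthDeath_eq_add, Finset.sum_add_distrib, birth, death, stay]
  abel

theorem birthDeath_detailed_balance (hflow : ∀ k < N, μ k * p k = μ (k + 1) * q (k + 1))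
    (hi : i ≤ N) (hj : j ≤ N) :
    μ i * birthDeath p q i j = μ j * birthDeath p q j i := by
  by_cases hup : j = i + 1
  · subst hup
    rw [birthDeath_self_succ, birthDeath_succ_self, hflow i hj]
  by_cases hdown : i = j + 1
  · subst hdown
    rw [birthDeath_self_succ, birthDeath_succ_self, hflow j hi]
  by_cases hdiag : i = j
  · rw [hdiag]
  · simp [birthDeath, hup, hdown, hdiag, Ne.symm hdiag]

theorem sum_range_mul_birthDeath (hq : q 0 = 0) (hp : p N = 0)
    (hflow : ∀ k < N, μ k * p k = μ (k + 1) * q (k + 1)) (hj : j ≤ N) :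
    ∑ i ∈ Finset.range (N + 1), μ i * birthDeath p q i j = μ j :=
  sum_mul_eq_of_detailed_balance
    (fun _ hi => birthDeath_detailed_balance hflow (Finset.mem_range_succ_iff.1 hi) hj)
    (sum_range_birthDeath hq hp hj)

end BirthDeath

section Bag

variable {N i k : ℕ} {α β : ℝ}

theorem bagP_eq_birthDeath (α β : ℝ) (hi : i ≤ N) (j : ℕ) :
    bagP N α β i j = birthDeath (fun m => α * ((N : ℝ) - m) / N) (fun m => β * m / N) i j := by
  rcases hi.eq_or_lt with rfl | hlt
  · simp only [bagP, birthDeath, lt_irrefl, and_false, if_false, sub_self, mul_zero, zero_div]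
    split_ifs <;> lia
  · simp only [bagP, birthDeath, hlt, and_true]

theorem bagPi_mul_birth_eq_bagPi_succ_mul_death (α β : ℝ) (hk : k < N) :
    bagPi N α β k * (α * ((N : ℝ) - k) / N)
      = bagPi N α β (k + 1) * (β * ((k + 1 : ℕ) : ℝ) / N) := by
  have hchoose : (N.choose (k + 1) : ℝ) * ((k + 1 : ℕ) : ℝ) = N.choose k * ((N : ℝ) - k) := by
    rw [← Nat.cast_sub hk.le]
    exact_mod_cast Nat.choose_succ_right_eq N k
  have hexp : N - k = N - (k + 1) + 1 := by lia
  calc bagPi N α β k * (α * ((N : ℝ) - k) / N)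
      = N.choose k * ((N : ℝ) - k)
          * (α ^ (k + 1) * β ^ (N - (k + 1) + 1) / (α + β) ^ N / N) := by
        rw [bagPi, hexp]
        ring
    _ = N.choose (k + 1) * ((k + 1 : ℕ) : ℝ)
          * (α ^ (k + 1) * β ^ (N - (k + 1) + 1) / (α + β) ^ N / N) := by
        rw [hchoose]
    _ = bagPi N α β (k + 1) * (β * ((k + 1 : ℕ) : ℝ) / N) := by
        rw [bagPi]
        ring

theorem bagPi_nonneg (hα : 0 ≤ α) (hβ : 0 ≤ β) (N k : ℕ) : 0 ≤ bagPi N α β k := by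
  unfold bagPi
  positivity

theorem sum_range_bagPi (hαβ : α + β ≠ 0) (N : ℕ) :
    ∑ k ∈ Finset.range (N + 1), bagPi N α β k = 1 := by
  simp only [bagPi]
  rw [← Finset.sum_div, div_eq_one_iff_eq (pow_ne_zero N hαβ), add_pow]
  exact Finset.sum_congr rfl fun _ _ => by ring

theorem sum_range_bagPi_mul_bagP (α β : ℝ) (hk : k ≤ N) :
    ∑ i ∈ Finset.range (N + 1), bagPi N α β i * bagP N α β i k = bagPi N α β k := by
  calc ∑ i ∈ Finset.range (N + 1), bagPi N α β i * bagP N α β i k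
      = ∑ i ∈ Finset.range (N + 1), bagPi N α β i *
          birthDeath (fun m => α * ((N : ℝ) - m) / N) (fun m => β * m / N) i k :=
        Finset.sum_congr rfl fun i hi => by
          rw [bagP_eq_birthDeath α β (Finset.mem_range_succ_iff.1 hi)]
    _ = bagPi N α β k :=
        sum_range_mul_birthDeath (by simp) (by simp)
          (fun _ => bagPi_mul_birth_eq_bagPi_succ_mul_death α β) hk

end Bag

theorem bagPi_stationary_general (N : ℕ) (hN : 1 ≤ N) (α β : ℝ)
    (hα : 0 ≤ α) (hβ : 0 ≤ β) (hαβ : 0 < α + β) :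
    (∀ k ≤ N, 0 ≤ bagPi N α β k) ∧
    (∑ k ∈ Finset.range (N + 1), bagPi N α β k = 1) ∧
    (∀ k ≤ N, ∑ i ∈ Finset.range (N + 1), bagPi N α β i * bagP N α β i k
        = bagPi N α β k) :=
  ⟨fun k _ => bagPi_nonneg hα hβ N k, sum_range_bagPi hαβ.ne' N,
    fun _ => sum_range_bagPi_mul_bagP α β⟩

/-- For the RPPLNS bag Markov chain (`N ≥ 1`, `α, β > 0`, `α + β ≤ 1`), the vector
`π_k = C(N,k)·α^k·β^{N−k}/(α+β)^N`, `k = 0,…,N`, is a probability distribution on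
`{0,…,N}` and is a stationary distribution of the chain: `π_k ≥ 0` for all `k`,
`∑_{k=0}^{N} π_k = 1`, and `∑_{i=0}^{N} π_i·P(i,k) = π_k` for every `k ∈ {0,…,N}`. -/
theorem bagPi_stationary (N : ℕ) (hN : 1 ≤ N) (α β : ℝ)
    (hα : 0 < α) (hβ : 0 < β) (hαβ : α + β ≤ 1) :
    (∀ k ≤ N, 0 ≤ bagPi N α β k) ∧
    (∑ k ∈ Finset.range (N + 1), bagPi N α β k = 1) ∧
    (∀ k ≤ N, ∑ i ∈ Finset.range (N + 1), bagPi N α β i * bagP N α β i k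
        = bagPi N α β k) :=
  bagPi_stationary_general N hN α β hα.le hβ.le (add_pos hα hβ)
end

section
/- Consider the residual-share process in an RPPLNS bag of size N ≥ 1: X₀ = A (a natural number with A ≤ N), and at each step X_{n+1} = X_n − B_n, where conditionally on X_n the random variable B_n is Bernoulli with success probability X_n/N (a uniformly random share of the full bag is replaced by a fresh share, which removes a residual share exactly when the chosen share is residual). Then for every n ∈ ℕ, E[X_n] = A·((N−1)/N)^n. -/
open MeasureTheory ProbabilityTheory
open scoped ENNReal

/-!
Almost surely one step either keeps the number of residual shares or lowers it by one, since the
two prescribed transition probabilities already add up to the mass of each state. The expectation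
therefore drops by the probability of a loss, which is `∑ x, (x / N) * P(X n = x) = E[X n] / N`
whatever the law of `X n`.
-/

section

variable {Ω : Type*} [MeasurableSpace Ω] {μ : Measure Ω} {N : ℕ} {X Y : Ω → ℕ}

/-- One replacement step in a bag of size `N`, for the numbers `X` and `Y` of residual shares
before and after the step. It prescribes only the joint law of `(X, Y)`, which is all that the
expectation depends on. -/
structure IsShareReplacement (μ : Measure Ω) (N : ℕ) (X Y : Ω → ℕ) : Prop where
  measure_down : ∀ x, 1 ≤ x →
    μ {ω | X ω = x ∧ Y ω = x - 1} = (x : ℝ≥0∞) / N * μ {ω | X ω = x}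
  measure_stay : ∀ x,
    μ {ω | X ω = x ∧ Y ω = x} = ((N - x : ℕ) : ℝ≥0∞) / N * μ {ω | X ω = x}

theorem lintegral_comp_eq_tsum {α : Type*} [MeasurableSpace α] [Countable α]
    [MeasurableSingletonClass α] {X : Ω → α} (hX : Measurable X) (f : α → ℝ≥0∞) :
    ∫⁻ ω, f (X ω) ∂μ = ∑' a, f a * μ {ω | X ω = a} := by
  rw [← lintegral_map (.of_discrete (f := f)) hX, lintegral_countable']
  exact tsum_congr fun a => by rw [Measure.map_apply hX (measurableSet_singleton a)]; rfl

theorem measurableSet_add_one_eq_fiber (hX : Measurable X) (hY : Measurable Y) (x : ℕ) :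
    MeasurableSet {ω | X ω = x ∧ Y ω + 1 = x} :=
  (hX (measurableSet_singleton x)).inter ((hY.add_const 1) (measurableSet_singleton x))

namespace IsShareReplacement

theorem measure_add_one_eq_fiber (h : IsShareReplacement μ N X Y) (x : ℕ) :
    μ {ω | X ω = x ∧ Y ω + 1 = x} = (x : ℝ≥0∞) / N * μ {ω | X ω = x} := by
  rcases Nat.eq_zero_or_pos x with rfl | hx
  · simp
  · simpa only [eq_tsub_iff_add_eq_of_le (show 1 ≤ x from hx)] using h.measure_down x hx

theorem ae_le [IsFiniteMeasure μ] (h : IsShareReplacement μ N X Y) (hN : N ≠ 0) :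
    ∀ᵐ ω ∂μ, X ω ≤ N := by
  suffices hfiber : ∀ x, N < x → μ {ω | X ω = x} = 0 by
    have hne : ∀ᵐ ω ∂μ, ∀ x, N < x → X ω ≠ x :=
      ae_all_iff.mpr fun x => Filter.eventually_imp_distrib_left.mpr fun hx =>
        measure_eq_zero_iff_ae_notMem.mp (hfiber x hx)
    exact hne.mono fun ω hω => not_lt.mp fun hlt => hω _ hlt rfl
  intro x hx
  by_contra hpos
  have hratio : 1 < (x : ℝ≥0∞) / N := by
    rw [ENNReal.lt_div_iff_mul_lt (by simp [hN]) (by simp), one_mul]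
    exact_mod_cast hx
  have hdown_le : (x : ℝ≥0∞) / N * μ {ω | X ω = x} ≤ μ {ω | X ω = x} :=
    h.measure_add_one_eq_fiber x ▸ measure_mono fun ω hω => hω.1
  have hlt := ENNReal.mul_lt_mul_left hpos (measure_ne_top μ _) hratio
  exact hdown_le.not_gt (by simpa only [one_mul] using hlt)

theorem measure_fiber_le (h : IsShareReplacement μ N X Y) (hN : N ≠ 0) (hX : Measurable X)
    (hY : Measurable Y) (x : ℕ) :
    μ {ω | X ω = x} ≤ μ {ω | X ω = x ∧ (Y ω = X ω ∨ Y ω + 1 = X ω)} := by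
  have hdisj : Disjoint {ω | X ω = x ∧ Y ω = x} {ω | X ω = x ∧ Y ω + 1 = x} :=
    Set.disjoint_left.mpr fun ω hstay hdown =>
      absurd (hdown.2.trans hstay.2.symm) (Nat.succ_ne_self _)
  have htotal : 1 ≤ ((N - x : ℕ) : ℝ≥0∞) / N + (x : ℝ≥0∞) / N := by
    rw [← ENNReal.add_div, ENNReal.le_div_iff_mul_le (by simp [hN]) (by simp), one_mul]
    exact_mod_cast (le_tsub_add : N ≤ N - x + x)
  calc μ {ω | X ω = x}
      ≤ (((N - x : ℕ) : ℝ≥0∞) / N + (x : ℝ≥0∞) / N) * μ {ω | X ω = x} :=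
        le_mul_of_one_le_left' htotal
    _ = μ {ω | X ω = x ∧ Y ω = x} + μ {ω | X ω = x ∧ Y ω + 1 = x} := by
        rw [add_mul, h.measure_stay, h.measure_add_one_eq_fiber]
    _ = μ ({ω | X ω = x ∧ Y ω = x} ∪ {ω | X ω = x ∧ Y ω + 1 = x}) :=
        (measure_union hdisj (measurableSet_add_one_eq_fiber hX hY x)).symm
    _ ≤ μ {ω | X ω = x ∧ (Y ω = X ω ∨ Y ω + 1 = X ω)} := by
        refine measure_mono ?_
        rintro ω (⟨rfl, hstay⟩ | ⟨rfl, hdown⟩)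
        · exact ⟨rfl, .inl hstay⟩
        · exact ⟨rfl, .inr hdown⟩

theorem ae_eq_or_add_one_eq [IsFiniteMeasure μ] (h : IsShareReplacement μ N X Y) (hN : N ≠ 0)
    (hX : Measurable X) (hY : Measurable Y) : ∀ᵐ ω ∂μ, Y ω = X ω ∨ Y ω + 1 = X ω := by
  have hmeas : MeasurableSet {ω | Y ω = X ω ∨ Y ω + 1 = X ω} :=
    (measurableSet_eq_fun hY hX).union (measurableSet_eq_fun (hY.add_const 1) hX)
  have hcover : μ (⋃ x, {ω | X ω = x ∧ (Y ω = X ω ∨ Y ω + 1 = X ω)}) = μ (⋃ x, {ω | X ω = x}) :=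
    measure_iUnion_congr_of_subset (fun _ _ hω => hω.1) (h.measure_fiber_le hN hX hY)
  rw [ae_iff_measure_eq hmeas.nullMeasurableSet]
  convert hcover using 2 <;> ext ω <;> simp

theorem measure_add_one_eq (h : IsShareReplacement μ N X Y) (hX : Measurable X)
    (hY : Measurable Y) : μ {ω | Y ω + 1 = X ω} = (∫⁻ ω, X ω ∂μ) / N := by
  have hunion : {ω | Y ω + 1 = X ω} = ⋃ x, {ω | X ω = x ∧ Y ω + 1 = x} := by
    ext ω
    simp
  have hdisj : Pairwise (Function.onFun Disjoint fun x => {ω | X ω = x ∧ Y ω + 1 = x}) :=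
    fun x y hxy => Set.disjoint_left.mpr fun ω hx hy => hxy (hx.1.symm.trans hy.1)
  calc μ {ω | Y ω + 1 = X ω}
      = ∑' x, μ {ω | X ω = x ∧ Y ω + 1 = x} := by
        rw [hunion, measure_iUnion hdisj (measurableSet_add_one_eq_fiber hX hY)]
    _ = ∑' x : ℕ, (x : ℝ≥0∞) * μ {ω | X ω = x} / N :=
        tsum_congr fun x => by rw [h.measure_add_one_eq_fiber, ENNReal.mul_div_right_comm]
    _ = (∑' x : ℕ, (x : ℝ≥0∞) * μ {ω | X ω = x}) / N := by
        simp only [div_eq_mul_inv, ENNReal.tsum_mul_right]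
    _ = (∫⁻ ω, X ω ∂μ) / N := by rw [lintegral_comp_eq_tsum hX Nat.cast]

theorem measureReal_add_one_eq (h : IsShareReplacement μ N X Y) (hX : Measurable X)
    (hY : Measurable Y) : μ.real {ω | Y ω + 1 = X ω} = (∫ ω, (X ω : ℝ) ∂μ) / N := by
  have hint : ∫ ω, (X ω : ℝ) ∂μ = (∫⁻ ω, X ω ∂μ).toReal :=
    integral_toReal (measurable_from_top.comp hX).aemeasurable
      (Filter.Eventually.of_forall fun ω => ENNReal.natCast_lt_top (X ω))
  rw [Measure.real, h.measure_add_one_eq hX hY, ENNReal.toReal_div, ENNReal.toReal_natCast, hint]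

theorem integrable [IsFiniteMeasure μ] (h : IsShareReplacement μ N X Y) (hN : N ≠ 0)
    (hX : Measurable X) : Integrable (fun ω => (X ω : ℝ)) μ := by
  refine .of_bound (measurable_from_top.comp hX).aestronglyMeasurable N ?_
  filter_upwards [h.ae_le hN] with ω hω
  simpa using hω

theorem integral_eq [IsFiniteMeasure μ] (h : IsShareReplacement μ N X Y) (hN : N ≠ 0)
    (hX : Measurable X) (hY : Measurable Y) :
    ∫ ω, (Y ω : ℝ) ∂μ = (∫ ω, (X ω : ℝ) ∂μ) * (((N : ℝ) - 1) / N) := by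
  have hdown_meas : MeasurableSet {ω | Y ω + 1 = X ω} :=
    measurableSet_eq_fun (hY.add_const 1) hX
  have hdown_int : Integrable ({ω | Y ω + 1 = X ω}.indicator (1 : Ω → ℝ)) μ :=
    (integrable_const 1).indicator hdown_meas
  have hdrop : ∀ᵐ ω ∂μ,
      (Y ω : ℝ) = X ω - {ω | Y ω + 1 = X ω}.indicator (1 : Ω → ℝ) ω := by
    filter_upwards [h.ae_eq_or_add_one_eq hN hX hY] with ω hω
    rcases hω with hstay | hdown
    · simp [hstay]
    · simp [← hdown]
  calc ∫ ω, (Y ω : ℝ) ∂μ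
      = ∫ ω, (X ω : ℝ) ∂μ - μ.real {ω | Y ω + 1 = X ω} := by
        rw [integral_congr_ae hdrop, integral_sub (h.integrable hN hX) hdown_int,
          integral_indicator_one hdown_meas]
    _ = (∫ ω, (X ω : ℝ) ∂μ) * (((N : ℝ) - 1) / N) := by
        rw [h.measureReal_add_one_eq hX hY]
        field_simp

end IsShareReplacement

theorem residual_share_expectation_general [IsFiniteMeasure μ] (hN : N ≠ 0) {X : ℕ → Ω → ℕ}
    (hX : ∀ n, Measurable (X n)) (hstep : ∀ n, IsShareReplacement μ N (X n) (X (n + 1)))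
    (n : ℕ) :
    ∫ ω, (X n ω : ℝ) ∂μ = (∫ ω, (X 0 ω : ℝ) ∂μ) * (((N : ℝ) - 1) / N) ^ n := by
  induction n with
  | zero => rw [pow_zero, mul_one]
  | succ n ih => rw [(hstep n).integral_eq hN (hX n) (hX (n + 1)), ih, pow_succ, mul_assoc]

end

/-- Residual-share process in an RPPLNS bag of size `N ≥ 1`: the Markov chain `(X n)` on
`{0,…,N}` starts at `X 0 = A` (`A ≤ N`), and from state `x` moves to `x − 1` with
probability `x/N` and stays at `x` with probability `(N−x)/N` (a uniformly random share
of the full bag is replaced by a fresh one, removing a residual share exactly when the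
chosen share is residual).  Then for every `n`, `E[X n] = A·((N−1)/N)^n`. -/
theorem residual_share_expectation
    (N A : ℕ) (hN : 1 ≤ N) (hA : A ≤ N)
    {Ω : Type*} [MeasureSpace Ω] [IsProbabilityMeasure (ℙ : Measure Ω)]
    (X : ℕ → Ω → ℕ) (hXmeas : ∀ n, Measurable (X n))
    (hX0 : ∀ ω, X 0 ω = A)
    (hXle : ∀ n ω, X n ω ≤ N)
    (hdown : ∀ n x, 1 ≤ x →
      ℙ {ω : Ω | X n ω = x ∧ X (n + 1) ω = x - 1}
        = ((x : ℝ≥0∞) / N) * ℙ {ω : Ω | X n ω = x})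
    (hstay : ∀ n x,
      ℙ {ω : Ω | X n ω = x ∧ X (n + 1) ω = x}
        = (((N - x : ℕ) : ℝ≥0∞) / N) * ℙ {ω : Ω | X n ω = x}) :
    ∀ n, ∫ ω, (X n ω : ℝ) ∂ℙ = A * (((N : ℝ) - 1) / N) ^ n := by
  intro n
  have hgen := residual_share_expectation_general (Nat.one_le_iff_ne_zero.mp hN) hXmeas
    (fun n => ⟨hdown n, hstay n⟩) n
  simpa [hX0] using hgen
end

section
/- In the PPLNS two-turn block-hoarding comparison, if α > (N + D − 1)/(D − 1)², then the strategic deviation strictly dominates honest mining: R_S > R_H, where R_H = H₁·p₁ + H₂·p₂ + H₃·p₃ + H₄·p₄ + H₅·p₅ + H₆·p₆ and R_S = S₁·p₁ + S₂·p₂ + S₃·p₃ + S₄·p₄ + S₅·p₅ + S₆·p₆. -/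
/-- Expected revenue of the honest strategy `H` in the PPLNS two-turn block-hoarding
comparison: `R_H = H₁·p₁ + H₂·p₂ + H₃·p₃ + H₄·p₄ + H₅·p₅ + H₆·p₆` with
`p₁ = α/D`, `p₂ = α(D−1)/D`, `p₃ = β/D`, `p₄ = β(D−1)/D`, `p₅ = γ/D`, `p₆ = γ(D−1)/D`,
`H₁ = 3/N + (N−2)/(ND) + (N−1)/(ND)`, `H₂ = 1/N + (N−2)/(ND) + (N−1)/(ND)`,
`H₃ = 2/N + (N−2)/(ND)`, `H₄ = 1/N + (N−2)/(ND)`, `H₅ = H₆ = 1/N + (N−1)/(ND)`. -/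
noncomputable def pplnsRH (N D α β γ : ℝ) : ℝ :=
  (3 / N + (N - 2) / (N * D) + (N - 1) / (N * D)) * (α / D)
    + (1 / N + (N - 2) / (N * D) + (N - 1) / (N * D)) * (α * (D - 1) / D)
    + (2 / N + (N - 2) / (N * D)) * (β / D)
    + (1 / N + (N - 2) / (N * D)) * (β * (D - 1) / D)
    + (1 / N + (N - 1) / (N * D)) * (γ / D)
    + (1 / N + (N - 1) / (N * D)) * (γ * (D - 1) / D)

/-- Expected revenue of the block-hoarding strategy `S` in the PPLNS two-turn comparison:
`R_S = S₁·p₁ + S₂·p₂ + S₃·p₃ + S₄·p₄ + S₅·p₅ + S₆·p₆` with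
`S₁ = 1/N + (N−1)/(ND)`, `S₂ = 2/N + (N−2)/(ND) + (N−1)/(ND)`, `S₃ = 0`,
`S₄ = 1/N + (N−1)/(ND)`, `S₅ = 0`, `S₆ = 1/N + (N−1)/(ND)`. -/
noncomputable def pplnsRS (N D α β γ : ℝ) : ℝ :=
  (1 / N + (N - 1) / (N * D)) * (α / D)
    + (2 / N + (N - 2) / (N * D) + (N - 1) / (N * D)) * (α * (D - 1) / D)
    + 0 * (β / D)
    + (1 / N + (N - 1) / (N * D)) * (β * (D - 1) / D)
    + 0 * (γ / D)
    + (1 / N + (N - 1) / (N * D)) * (γ * (D - 1) / D)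

/-- Of the three coefficients of `α`, `β` and `γ`, hoarding loses the same amount
`(N + D - 1) / (N * D ^ 2)` in each, and only the strategic miner's also gains
`(D - 1) ^ 2 / (N * D ^ 2)`. -/
lemma pplnsRS_sub_pplnsRH {N D : ℝ} (hN : N ≠ 0) (hD : D ≠ 0) (α β γ : ℝ) :
    pplnsRS N D α β γ - pplnsRH N D α β γ =
      (α * (D - 1) ^ 2 - (α + β + γ) * (N + D - 1)) / (N * D ^ 2) := by
  unfold pplnsRS pplnsRH
  field_simp
  ring

theorem pplns_block_hoarding_dominates_general {N D α β γ : ℝ} (hN : 0 < N)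
    (hD₀ : D ≠ 0) (hD₁ : D ≠ 1) (hsum : α + β + γ = 1) :
    pplnsRS N D α β γ > pplnsRH N D α β γ ↔ α > (N + D - 1) / (D - 1) ^ 2 := by
  have hscale : 0 < N * D ^ 2 := by positivity
  have hthreshold : 0 < (D - 1) ^ 2 := sq_pos_of_ne_zero (sub_ne_zero.mpr hD₁)
  rw [gt_iff_lt, gt_iff_lt, ← sub_pos, pplnsRS_sub_pplnsRH hN.ne' hD₀, hsum, one_mul,
    div_pos_iff_of_pos_right hscale, sub_pos, div_lt_iff₀ hthreshold]

/-- In the PPLNS two-turn block-hoarding comparison (queue size `N ≥ 1`, difficulty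
`D ≥ 2`, hash powers `α, β, γ ≥ 0` with `α + β + γ = 1`), if
`α > (N + D − 1)/(D − 1)²` then the strategic deviation strictly dominates honest
mining: `R_S > R_H`. -/
theorem pplns_block_hoarding_dominates
    (N D : ℕ) (hN : 1 ≤ N) (hD : 2 ≤ D) (α β γ : ℝ)
    (hα : 0 ≤ α) (hβ : 0 ≤ β) (hγ : 0 ≤ γ) (hsum : α + β + γ = 1)
    (h : α > ((N : ℝ) + D - 1) / ((D : ℝ) - 1) ^ 2) :
    pplnsRS N D α β γ > pplnsRH N D α β γ := by
  exact (pplns_block_hoarding_dominates_general (by exact_mod_cast hN)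
    (by norm_cast; lia) (by norm_cast; lia) hsum).mpr h
end

section
/- In the RPPLNS two-turn block-hoarding comparison with an empty bag (k = 0), if α > (1/(D−1)²)·(N·D/(N−1) + N − β·(N−2)), then the strategic deviation strictly dominates honest mining: Δ₁·p₁ + Δ₂·p₂ + Δ₃·p₃ + Δ₄·p₄ + Δ₅·p₅ + Δ₆·p₆ > 0. -/
/-!
Since `α + β + γ = 1`, the expected surplus is the surplus `O` of the outside miner's cases plus
`α * (S - O) + β * (H - O)`, where `S` and `H` are the surpluses of the strategic and the honest
miner's cases. Over the common denominator `(N * D) ^ 2` the terms that do not contain the factor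
`N - 1` cancel in both differences, leaving `(N - 1) * (D - 1) ^ 2` and `(N - 1) * (N - 2)`, while
`O` has numerator `-N * (D + N - 1)`. Positivity is thus a linear inequality in `α` with positive
leading coefficient, and the threshold is its root.
-/

section Field

variable {K : Type*} [Field K]

/-- Mean payoff surplus of hoarding when the strategic pool miner finds the next share, which is a
block with probability `1 / D`: the mean of `Δ₁` and `Δ₂`. -/
def strategicSurplus (N D : K) : K :=
  -(1 / N + (N - 1) / N ^ 2 + (N - 1) ^ 2 / (N ^ 2 * D)) * (1 / D)
    + (N - 1) / N ^ 2 * ((D - 1) / D)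

/-- Mean payoff surplus of hoarding when the honest pool miner finds the next share, which is a
block with probability `1 / D`: the mean of `Δ₃` and `Δ₄`. -/
def honestSurplus (N D : K) : K :=
  -(1 / N + (N - 1) / N ^ 2 + (N - 1) / (N ^ 2 * D)) * (1 / D)
    + (N - 1) / (N ^ 2 * D) * ((D - 1) / D)

/-- Mean payoff surplus of hoarding when the outside miner finds the next share, which is a block
with probability `1 / D`: the mean of `Δ₅` and `Δ₆ = 0`. -/
def outsideSurplus (N D : K) : K :=
  -(1 / N + (N - 1) / (N * D)) * (1 / D)

/-- Expected payoff surplus `Δ₁ * p₁ + ⋯ + Δ₆ * p₆` of hoarding over honest mining, with the six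
cases grouped by the miner, of hash power `α`, `β` or `γ`, who finds the next share. -/
def hoardingSurplus (N D α β γ : K) : K :=
  α * strategicSurplus N D + β * honestSurplus N D + γ * outsideSurplus N D

/-- The hash power of the strategic miner at which hoarding breaks even. -/
def hoardingThreshold (N D β : K) : K :=
  1 / (D - 1) ^ 2 * (N * D / (N - 1) + N - β * (N - 2))

variable {N D α β γ : K}

lemma outsideSurplus_eq_div (hN : N ≠ 0) (hD : D ≠ 0) :
    outsideSurplus N D = -(N * (D + N - 1)) / (N * D) ^ 2 := by
  unfold outsideSurplus
  field_simp
  ring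

lemma strategicSurplus_sub_outsideSurplus (hN : N ≠ 0) (hD : D ≠ 0) :
    strategicSurplus N D - outsideSurplus N D = (N - 1) * (D - 1) ^ 2 / (N * D) ^ 2 := by
  unfold strategicSurplus outsideSurplus
  field_simp
  ring

lemma honestSurplus_sub_outsideSurplus (hN : N ≠ 0) (hD : D ≠ 0) :
    honestSurplus N D - outsideSurplus N D = (N - 1) * (N - 2) / (N * D) ^ 2 := by
  unfold honestSurplus outsideSurplus
  field_simp
  ring

lemma hoardingSurplus_eq_div (hN : N ≠ 0) (hD : D ≠ 0) (hsum : α + β + γ = 1) :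
    hoardingSurplus N D α β γ =
      ((N - 1) * (α * (D - 1) ^ 2 + β * (N - 2)) - N * (D + N - 1)) / (N * D) ^ 2 :=
  calc
    hoardingSurplus N D α β γ
      = α * (strategicSurplus N D - outsideSurplus N D)
          + β * (honestSurplus N D - outsideSurplus N D) + outsideSurplus N D := by
        unfold hoardingSurplus
        linear_combination outsideSurplus N D * hsum
    _ = ((N - 1) * (α * (D - 1) ^ 2 + β * (N - 2)) - N * (D + N - 1)) / (N * D) ^ 2 := by
        rw [strategicSurplus_sub_outsideSurplus hN hD, honestSurplus_sub_outsideSurplus hN hD,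
          outsideSurplus_eq_div hN hD]
        ring

end Field

section LinearOrderedField

variable {K : Type*} [Field K] [LinearOrder K] [IsStrictOrderedRing K] {N D α β γ : K}

lemma hoardingThreshold_lt_iff (hN : 1 < N) (hD : D ≠ 1) :
    hoardingThreshold N D β < α ↔
      N * (D + N - 1) < (N - 1) * (α * (D - 1) ^ 2 + β * (N - 2)) := by
  have hN' : 0 < N - 1 := sub_pos.2 hN
  have hD' : 0 < (D - 1) ^ 2 := sq_pos_of_ne_zero (sub_ne_zero.2 hD)
  have common_denom : N * D / (N - 1) + N = N * (D + N - 1) / (N - 1) := by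
    field_simp
    ring
  rw [hoardingThreshold, one_div_mul_eq_div, div_lt_iff₀ hD', sub_lt_iff_lt_add, common_denom,
    div_lt_iff₀' hN']

theorem rpplns_block_hoarding_dominates_general (hN : 1 < N) (hD : 1 < D)
    (hsum : α + β + γ = 1) :
    0 < hoardingSurplus N D α β γ ↔ hoardingThreshold N D β < α := by
  have hN₀ : N ≠ 0 := (zero_lt_one.trans hN).ne'
  have hD₀ : D ≠ 0 := (zero_lt_one.trans hD).ne'
  have denom_pos : 0 < (N * D) ^ 2 := by positivity
  rw [hoardingSurplus_eq_div hN₀ hD₀ hsum, div_pos_iff_of_pos_right denom_pos, sub_pos,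
    hoardingThreshold_lt_iff hN hD.ne']

end LinearOrderedField

/-- In the RPPLNS two-turn block-hoarding comparison with an empty bag (`k = 0`), with
bag size `N ≥ 2`, difficulty `D ≥ 2`, and hash powers `α, β, γ ≥ 0`, `α + β + γ = 1`,
the case probabilities are `p₁ = α/D`, `p₂ = α(D−1)/D`, `p₃ = β/D`, `p₄ = β(D−1)/D`,
`p₅ = γ/D`, `p₆ = γ(D−1)/D`, and the per-case payoff surpluses of the hoarding strategy
over the honest strategy are `Δ₁ = −(1/N + (N−1)/N² + (N−1)²/(N²D))`, `Δ₂ = (N−1)/N²`,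
`Δ₃ = −(1/N + (N−1)/N² + (N−1)/(N²D))`, `Δ₄ = (N−1)/(N²D)`, `Δ₅ = −(1/N + (N−1)/(ND))`,
`Δ₆ = 0`.  If `α > (1/(D−1)²)·(N·D/(N−1) + N − β·(N−2))`, then the strategic deviation
strictly dominates honest mining: `Δ₁·p₁ + Δ₂·p₂ + Δ₃·p₃ + Δ₄·p₄ + Δ₅·p₅ + Δ₆·p₆ > 0`. -/
theorem rpplns_block_hoarding_dominates
    (N D : ℕ) (hN : 2 ≤ N) (hD : 2 ≤ D) (α β γ : ℝ)
    (hα : 0 ≤ α) (hβ : 0 ≤ β) (hγ : 0 ≤ γ) (hsum : α + β + γ = 1)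
    (h : α > (1 / ((D : ℝ) - 1) ^ 2) *
        ((N : ℝ) * D / ((N : ℝ) - 1) + N - β * ((N : ℝ) - 2))) :
    (-(1 / (N : ℝ) + ((N : ℝ) - 1) / (N : ℝ) ^ 2
          + ((N : ℝ) - 1) ^ 2 / ((N : ℝ) ^ 2 * D))) * (α / D)
      + (((N : ℝ) - 1) / (N : ℝ) ^ 2) * (α * ((D : ℝ) - 1) / D)
      + (-(1 / (N : ℝ) + ((N : ℝ) - 1) / (N : ℝ) ^ 2
          + ((N : ℝ) - 1) / ((N : ℝ) ^ 2 * D))) * (β / D)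
      + (((N : ℝ) - 1) / ((N : ℝ) ^ 2 * D)) * (β * ((D : ℝ) - 1) / D)
      + (-(1 / (N : ℝ) + ((N : ℝ) - 1) / ((N : ℝ) * D))) * (γ / D)
      + 0 * (γ * ((D : ℝ) - 1) / D) > 0 := by
  have surplus_pos : 0 < hoardingSurplus (N : ℝ) D α β γ :=
    (rpplns_block_hoarding_dominates_general (mod_cast hN) (mod_cast hD) hsum).2 h
  refine surplus_pos.trans_eq ?_
  unfold hoardingSurplus strategicSurplus honestSurplus outsideSurplus
  ring
end
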